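/- There is no group homomorphism φ : A(D_n) → A(B_n) that is injective and satisfies π_D = π_B ∘ φ, where π_B : A(B_n) → B_n and π_D : A(D_n) → B_n are the epimorphisms defined on standard generators by π_B(β₁) = 1, π_B(β_i) = α_{i-1} for i ≥ 2, and π_D(δ₁) = π_D(δ₂) = α₁, π_D(δ_i) = α_{i-1} for i ≥ 3 (with n ≥ 4). -/

import Mathlib

/-- The braid relator `a b a (b a b)⁻¹`. -/
def braidWord {α : Type*} (a b : FreeGroup α) : FreeGroup α := a * b * a * (b * a * b)⁻¹

/-- The commutation relator `a b a⁻¹ b⁻¹`. -/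
def commWord {α : Type*} (a b : FreeGroup α) : FreeGroup α := a * b * a⁻¹ * b⁻¹

/-- Braid relators on `k` generators `α₀, …, α_{k-1}` (braid group on `k+1` strands). -/
def braidRels (k : ℕ) : Set (FreeGroup (Fin k)) :=
  {r | ∃ i j : Fin k,
    ((i : ℕ) + 1 = j ∧ r = braidWord (FreeGroup.of i) (FreeGroup.of j)) ∨
    ((i : ℕ) + 2 ≤ j ∧ r = commWord (FreeGroup.of i) (FreeGroup.of j))}

/-- Relators of the Artin group of type `Bₙ` on generators `β₀, …, β_{n-1}`
(standing for `β₁, …, βₙ`): `β₀β₁β₀β₁ = β₁β₀β₁β₀`; braid relations between consecutive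
generators `βᵢ, βᵢ₊₁` for `i ≥ 1`; commutation for `|i-j| ≥ 2`. -/
def typeBRels (n : ℕ) : Set (FreeGroup (Fin n)) :=
  {r | ∃ i j : Fin n,
    ((i : ℕ) = 0 ∧ (j : ℕ) = 1 ∧
      r = (FreeGroup.of i * FreeGroup.of j) ^ 2 * ((FreeGroup.of j * FreeGroup.of i) ^ 2)⁻¹) ∨
    (1 ≤ (i : ℕ) ∧ (i : ℕ) + 1 = j ∧ r = braidWord (FreeGroup.of i) (FreeGroup.of j)) ∨
    ((i : ℕ) + 2 ≤ j ∧ r = commWord (FreeGroup.of i) (FreeGroup.of j))}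

/-- Relators of the Artin group of type `Dₙ` on generators `δ₀, …, δ_{n-1}`
(standing for `δ₁, …, δₙ`): `δ₀δ₁ = δ₁δ₀`; both `δ₀` and `δ₁` braid with `δ₂`;
braid relations between consecutive generators `δᵢ, δᵢ₊₁` for `i ≥ 2`;
commutation otherwise. -/
def typeDRels (n : ℕ) : Set (FreeGroup (Fin n)) :=
  {r | ∃ i j : Fin n,
    ((i : ℕ) = 0 ∧ (j : ℕ) = 1 ∧ r = commWord (FreeGroup.of i) (FreeGroup.of j)) ∨
    ((i : ℕ) = 0 ∧ (j : ℕ) = 2 ∧ r = braidWord (FreeGroup.of i) (FreeGroup.of j)) ∨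
    ((i : ℕ) = 1 ∧ (j : ℕ) = 2 ∧ r = braidWord (FreeGroup.of i) (FreeGroup.of j)) ∨
    (2 ≤ (i : ℕ) ∧ (i : ℕ) + 1 = j ∧ r = braidWord (FreeGroup.of i) (FreeGroup.of j)) ∨
    ((i : ℕ) = 0 ∧ 3 ≤ (j : ℕ) ∧ r = commWord (FreeGroup.of i) (FreeGroup.of j)) ∨
    (1 ≤ (i : ℕ) ∧ (i : ℕ) + 2 ≤ j ∧ r = commWord (FreeGroup.of i) (FreeGroup.of j))}

section conjgen
variable {G : Type*} [Group G]

/-- The elements `X₀ = b₀`, `X_{k+1} = b_{k+1} X_k b_{k+1}⁻¹`. -/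
def XX (b : ℕ → G) : ℕ → G
  | 0 => b 0
  | k + 1 => b (k + 1) * XX b k * (b (k + 1))⁻¹

theorem XX_far (b : ℕ → G) (hc : ∀ k l, k + 2 ≤ l → b k * b l = b l * b k) (i : ℕ) :
    ∀ k, i + 2 ≤ k → Commute (b k) (XX b i) := by
  induction i with
  | zero => intro k hk; exact (hc 0 k hk).symm
  | succ i ih =>
    intro k hk
    have h1 : Commute (b k) (b (i + 1)) := (hc (i + 1) k (by omega)).symm
    exact (h1.mul_right (ih k (by omega))).mul_right h1.inv_right

theorem XX_near (b : ℕ → G) (n : ℕ) (hc : ∀ k l, k + 2 ≤ l → b k * b l = b l * b k)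
    (hb : ∀ k, 1 ≤ k → k + 1 < n → b k * b (k + 1) * b k = b (k + 1) * b k * b (k + 1))
    (k : ℕ) (hk : 1 ≤ k) (i : ℕ) : k < i → i < n → Commute (b k) (XX b i) := by
  induction i with
  | zero => omega
  | succ i ih =>
    intro h1 h2
    rcases Nat.lt_or_ge k i with h | h
    · have h3 : Commute (b k) (b (i + 1)) := hc k (i + 1) (by omega)
      exact (h3.mul_right (ih h (by omega))).mul_right h3.inv_right
    · obtain rfl : i = k := by omega
      obtain ⟨m, rfl⟩ : ∃ m, i = m + 1 := ⟨i - 1, by omega⟩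
      have hz : b (m + 1 + 1) * XX b m = XX b m * b (m + 1 + 1) :=
        XX_far b hc m (m + 1 + 1) (by omega)
      have hB := hb (m + 1) hk h2
      simp only [XX]
      generalize XX b m = Z at *
      generalize b (m + 1) = p at *
      generalize b (m + 1 + 1) = q at *
      have e : q * (p * Z * p⁻¹) * q⁻¹ = (q * p) * Z * (q * p)⁻¹ := by group
      rw [e, Commute, SemiconjBy, ← mul_assoc, ← mul_assoc, ← mul_assoc, hB,
        mul_assoc (q * p) q Z, hz]
      have hB' : p⁻¹ * q⁻¹ * p = q * p⁻¹ * q⁻¹ := by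
        have : q * p * q * q⁻¹ * p⁻¹ * q⁻¹ = 1 := by group
        rw [← mul_left_cancel_iff (a := q * p), ← mul_right_cancel_iff (a := q * p)]
        have : q * p * (p⁻¹ * q⁻¹ * p) * (q * p) = p * q * p := by group
        rw [this, hB]; group
      have : q * p * Z * (q * p)⁻¹ * p = q * p * Z * (p⁻¹ * q⁻¹ * p) := by group
      rw [this, hB']; group

theorem XX_twist (b : ℕ → G) (n : ℕ) (hn : 2 ≤ n) (hc : ∀ k l, k + 2 ≤ l → b k * b l = b l * b k)
    (hb : ∀ k, 1 ≤ k → k + 1 < n → b k * b (k + 1) * b k = b (k + 1) * b k * b (k + 1))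
    (h4 : (b 0 * b 1) ^ 2 = (b 1 * b 0) ^ 2) (k : ℕ) : k + 1 < n →
    b (k + 1) * XX b (k + 1) * (b (k + 1))⁻¹ =
      (XX b (k + 1))⁻¹ * XX b k * XX b (k + 1) := by
  induction k with
  | zero =>
    intro _
    simp only [XX, zero_add]
    generalize b 0 = t at *
    generalize b 1 = s at *
    have e : t * s * t * s = s * t * s * t := by simpa [pow_two, mul_assoc] using h4
    have e2 : t * s * t * s⁻¹ = s⁻¹ * (t * s * t) := by
      have h5 : s * (t * s * t * s⁻¹) * s = s * (s⁻¹ * (t * s * t)) * s := by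
        have : s * (s⁻¹ * (t * s * t)) * s = t * s * t * s := by group
        rw [this, e]; group
      exact mul_left_cancel (mul_right_cancel h5)
    have : (s * t * s⁻¹)⁻¹ * t * (s * t * s⁻¹) = s * t⁻¹ * s⁻¹ * (t * s * t * s⁻¹) := by group
    rw [this, ← mul_right_cancel_iff (a := s * s)]
    have : s * t⁻¹ * s⁻¹ * (t * s * t * s⁻¹) * (s * s) = s * t⁻¹ * s⁻¹ * (t * s * t * s) := by
      group
    rw [this, e]; group
  | succ m ih =>
    intro h2
    have ih' := ih (by omega)
    have hz : b (m + 1 + 1) * XX b m = XX b m * b (m + 1 + 1) :=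
      XX_far b hc m (m + 1 + 1) (by omega)
    have hB := hb (m + 1) (by omega) h2
    have x1 : XX b (m + 1) = b (m + 1) * XX b m * (b (m + 1))⁻¹ := rfl
    have x2 : XX b (m + 1 + 1) = b (m + 1 + 1) * XX b (m + 1) * (b (m + 1 + 1))⁻¹ := rfl
    generalize XX b (m + 1 + 1) = W at *
    generalize XX b (m + 1) = Y at *
    generalize XX b m = Z at *
    generalize b (m + 1) = p at *
    generalize b (m + 1 + 1) = q at *
    have c1 : MulAut.conj (p * q) p = q := by
      simp only [MulAut.conj_apply]; rw [hB]; group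
    have c2 : MulAut.conj (p * q) Z = Y := by
      simp only [MulAut.conj_apply]; rw [mul_assoc p q Z, hz, x1]; group
    have c3 : MulAut.conj (p * q) Y = W := by
      simp only [MulAut.conj_apply]
      rw [x2, x1]
      have : p * q * (p * Z * p⁻¹) * (p * q)⁻¹ = (p * q * p) * Z * (p * q * p)⁻¹ := by group
      rw [this, hB, mul_assoc _ q Z, hz]; group
    have := congrArg (MulAut.conj (p * q)) ih'
    generalize MulAut.conj (p * q) = f at *
    simpa only [map_mul, map_inv, c1, c2, c3] using this

/-- The key normality statement. -/
theorem XX_conj (b : ℕ → G) (n : ℕ) (hn : 2 ≤ n)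
    (hc : ∀ k l, k + 2 ≤ l → b k * b l = b l * b k)
    (hb : ∀ k, 1 ≤ k → k + 1 < n → b k * b (k + 1) * b k = b (k + 1) * b k * b (k + 1))
    (h4 : (b 0 * b 1) ^ 2 = (b 1 * b 0) ^ 2) (H : Subgroup G)
    (hH : H = Subgroup.closure {x | ∃ i, i < n ∧ x = XX b i}) (k : ℕ) (hk : k + 1 < n) :
    b (k + 1) ∈ Subgroup.normalizer (H : Set G) := by
  have hX : ∀ i, i < n → XX b i ∈ H := fun i hi => by
    rw [hH]; exact Subgroup.subset_closure ⟨i, hi, rfl⟩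
  have tw := XX_twist b n hn hc hb h4 k hk
  have key : ∀ i, i < n → b (k + 1) * XX b i * (b (k + 1))⁻¹ ∈ H ∧
      (b (k + 1))⁻¹ * XX b i * b (k + 1) ∈ H := by
    intro i hi
    by_cases hcm : Commute (b (k + 1)) (XX b i)
    · have e1 : b (k + 1) * XX b i = XX b i * b (k + 1) := hcm
      constructor
      · rw [e1]; simpa using hX i hi
      · rw [mul_assoc, ← e1]; simpa using hX i hi
    · have : i = k ∨ i = k + 1 := by
        by_contra hcon
        apply hcm
        rcases Nat.lt_or_ge i k with h | h
        · exact XX_far b hc i (k + 1) (by omega)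
        · exact XX_near b n hc hb (k + 1) (by omega) i (by omega) hi
      have x1 : XX b (k + 1) = b (k + 1) * XX b k * (b (k + 1))⁻¹ := rfl
      rcases this with rfl | rfl
      · refine ⟨hX _ hk, ?_⟩
        have : (b (i + 1))⁻¹ * XX b i * b (i + 1) = XX b i * XX b (i + 1) * (XX b i)⁻¹ := by
          have e : XX b i = XX b (i + 1) * (b (i + 1) * XX b (i + 1) * (b (i + 1))⁻¹) *
              (XX b (i + 1))⁻¹ := by rw [tw]; group
          have e3 : (b (i + 1))⁻¹ * XX b (i + 1) * b (i + 1) = XX b i := by rw [x1]; group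
          calc _ = (b (i + 1))⁻¹ * (XX b (i + 1) * (b (i + 1) * XX b (i + 1) * (b (i + 1))⁻¹) *
              (XX b (i + 1))⁻¹) * b (i + 1) := by rw [← e]
            _ = ((b (i + 1))⁻¹ * XX b (i + 1) * b (i + 1)) * XX b (i + 1) *
                ((b (i + 1))⁻¹ * XX b (i + 1) * b (i + 1))⁻¹ := by group
            _ = _ := by rw [e3]
        rw [this]
        exact H.mul_mem (H.mul_mem (hX _ hi) (hX _ hk)) (H.inv_mem (hX _ hi))
      · constructor
        · rw [tw]
          exact H.mul_mem (H.mul_mem (H.inv_mem (hX _ hk)) (hX _ (by omega))) (hX _ hk)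
        · rw [x1]; simpa [mul_assoc] using hX k (by omega)
  have gen : ∀ c : G, (∀ i, i < n → c * XX b i * c⁻¹ ∈ H) → ∀ h ∈ H, c * h * c⁻¹ ∈ H := by
    intro c hc'
    have : H ≤ H.comap (MulAut.conj c).toMonoidHom := by
      conv_lhs => rw [hH]
      rw [Subgroup.closure_le]
      rintro _ ⟨i, hi, rfl⟩
      exact hc' i hi
    exact fun h hh => this hh
  rw [Subgroup.mem_normalizer_iff]
  intro h
  refine ⟨gen _ (fun i hi => (key i hi).1) h, fun hh => ?_⟩
  have := gen (b (k + 1))⁻¹ (fun i hi => by simpa using (key i hi).2) _ hh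
  simpa [mul_assoc] using this
end conjgen

section algebra
variable {F : Type*} [Group F]

/-- The augmentation ideal of the rational group algebra, as a subspace. -/
noncomputable def augI (F : Type*) [Group F] : Submodule ℚ (MonoidAlgebra ℚ F) :=
  Submodule.span ℚ (Set.range fun g : F => MonoidAlgebra.of ℚ F g - 1)

theorem augI_mem (g : F) : MonoidAlgebra.of ℚ F g - 1 ∈ augI F :=
  Submodule.subset_span ⟨g, rfl⟩

theorem augI_sq_le : augI F * augI F ≤ augI F := by
  conv_lhs => rw [augI, Submodule.span_mul_span]
  rw [Submodule.span_le]
  rintro _ ⟨_, ⟨g, rfl⟩, _, ⟨h, rfl⟩, rfl⟩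
  have : (MonoidAlgebra.of ℚ F g - 1) * (MonoidAlgebra.of ℚ F h - 1) =
      (MonoidAlgebra.of ℚ F (g * h) - 1) - (MonoidAlgebra.of ℚ F g - 1) -
        (MonoidAlgebra.of ℚ F h - 1) := by rw [map_mul]; noncomm_ring
  simp only [this]
  exact sub_mem (sub_mem (augI_mem _) (augI_mem _)) (augI_mem _)

theorem augI_pow_succ_le (k : ℕ) : augI F ^ (k + 2) ≤ augI F ^ (k + 1) := by
  rw [pow_succ, pow_succ, mul_assoc]
  exact mul_le_mul' le_rfl augI_sq_le

theorem augI_of_mul (k : ℕ) (g : F) {u : MonoidAlgebra ℚ F} (hu : u ∈ augI F ^ (k + 1)) :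
    MonoidAlgebra.of ℚ F g * u ∈ augI F ^ (k + 1) := by
  have : MonoidAlgebra.of ℚ F g * u = (MonoidAlgebra.of ℚ F g - 1) * u + u := by noncomm_ring
  rw [this]
  refine add_mem (augI_pow_succ_le k ?_) hu
  rw [pow_succ']
  exact Submodule.mul_mem_mul (augI_mem g) hu

/-- The automorphism of the group algebra. -/
noncomputable abbrev algMap (A : MulAut F) : MonoidAlgebra ℚ F →ₐ[ℚ] MonoidAlgebra ℚ F :=
  MonoidAlgebra.mapDomainAlgHom ℚ ℚ A.toMonoidHom

theorem algMap_of (A : MulAut F) (g : F) :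
    algMap A (MonoidAlgebra.of ℚ F g) = MonoidAlgebra.of ℚ F (A g) := by
  simp [algMap]

theorem algMap_augI (A : MulAut F) (k : ℕ) {u : MonoidAlgebra ℚ F} (hu : u ∈ augI F ^ k) :
    algMap A u ∈ augI F ^ k := by
  have h1 : (augI F).map (algMap A).toLinearMap ≤ augI F := by
    conv_lhs => rw [augI, Submodule.map_span]
    rw [Submodule.span_le]
    rintro _ ⟨_, ⟨g, rfl⟩, rfl⟩
    have : algMap A (MonoidAlgebra.of ℚ F g - 1) = MonoidAlgebra.of ℚ F (A g) - 1 := by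
      rw [map_sub, algMap_of, map_one]
    simp only [AlgHom.toLinearMap_apply, this]
    exact augI_mem _
  have h2 : (augI F ^ k).map (algMap A).toLinearMap ≤ augI F ^ k := by
    rw [Submodule.map_pow]; exact pow_le_pow_left' h1 _
  exact h2 ⟨u, hu, rfl⟩

/-- Automorphisms acting trivially on the abelianization (rationally). -/
def IsIA (A : MulAut F) : Prop :=
  ∀ g : F, MonoidAlgebra.of ℚ F (A g) - MonoidAlgebra.of ℚ F g ∈ augI F ^ 2

theorem IsIA.mul {A B : MulAut F} (hA : IsIA A) (hB : IsIA B) : IsIA (A * B) := by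
  intro g
  have := add_mem (hA (B g)) (hB g)
  simpa using this

theorem isIA_conj (u : F) : IsIA (MulAut.conj u) := by
  intro g
  have e : MonoidAlgebra.of ℚ F (MulAut.conj u g) - MonoidAlgebra.of ℚ F g =
      -((MonoidAlgebra.of ℚ F (u * g * u⁻¹) - 1) * (MonoidAlgebra.of ℚ F u - 1)) +
      (MonoidAlgebra.of ℚ F u - 1) * (MonoidAlgebra.of ℚ F g - 1) := by
    have h1 : MonoidAlgebra.of ℚ F (u * g * u⁻¹) * MonoidAlgebra.of ℚ F u =
      MonoidAlgebra.of ℚ F u * MonoidAlgebra.of ℚ F g := by rw [← map_mul, ← map_mul]; simp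
    simp only [MulAut.conj_apply, sub_mul, mul_sub, h1]
    noncomm_ring
  rw [e, pow_two]
  exact add_mem (neg_mem (Submodule.mul_mem_mul (augI_mem _) (augI_mem _)))
    (Submodule.mul_mem_mul (augI_mem _) (augI_mem _))

theorem isIA_of_gens {S : Type*} (A : MulAut (FreeGroup S))
    (h : ∀ s, ∃ u : FreeGroup S, A (FreeGroup.of s) = u * FreeGroup.of s * u⁻¹) : IsIA A := by
  have aux : ∀ g h' : FreeGroup S, MonoidAlgebra.of ℚ _ (g * h') - 1 -
      ((MonoidAlgebra.of ℚ _ g - 1) + (MonoidAlgebra.of ℚ _ h' - 1)) ∈ augI (FreeGroup S) ^ 2 := by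
    intro g h'
    rw [pow_two]
    have : MonoidAlgebra.of ℚ _ (g * h') - 1 -
      ((MonoidAlgebra.of ℚ _ g - 1) + (MonoidAlgebra.of ℚ _ h' - 1)) =
      (MonoidAlgebra.of ℚ _ g - 1) * (MonoidAlgebra.of ℚ _ h' - 1) := by
        rw [map_mul]; noncomm_ring
    rw [this]
    exact Submodule.mul_mem_mul (augI_mem _) (augI_mem _)
  have hmul : ∀ x y : FreeGroup S,
      MonoidAlgebra.of ℚ _ (A x) - MonoidAlgebra.of ℚ _ x ∈ augI (FreeGroup S) ^ 2 →
      MonoidAlgebra.of ℚ _ (A y) - MonoidAlgebra.of ℚ _ y ∈ augI (FreeGroup S) ^ 2 →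
      MonoidAlgebra.of ℚ _ (A (x * y)) - MonoidAlgebra.of ℚ _ (x * y) ∈
        augI (FreeGroup S) ^ 2 := by
    intro x y hx hy
    rw [map_mul A]
    have := add_mem (sub_mem (aux (A x) (A y)) (aux x y)) (add_mem hx hy)
    convert this using 1
    abel
  intro g
  induction g using FreeGroup.induction_on with
  | C1 => simp
  | of s =>
    obtain ⟨u, hu⟩ := h s
    rw [hu]
    exact isIA_conj u (FreeGroup.of s)
  | inv_of s _ =>
    obtain ⟨u, hu⟩ := h s
    rw [map_inv, hu]
    simpa [mul_assoc] using isIA_conj u (FreeGroup.of s)⁻¹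
  | mul x y hx hy => exact hmul x y hx hy

theorem IsIA.pow {A : MulAut F} (hA : IsIA A) (k : ℕ) : ∀ u ∈ augI F ^ (k + 1),
    algMap A u - u ∈ augI F ^ (k + 2) := by
  have base : ∀ u ∈ augI F, algMap A u - u ∈ augI F ^ 2 := by
    intro u hu
    refine Submodule.span_induction (p := fun u _ => algMap A u - u ∈ augI F ^ 2)
      ?_ ?_ ?_ ?_ hu
    · rintro _ ⟨g, rfl⟩
      rw [map_sub, algMap_of, map_one]
      simpa using hA g
    · simp
    · intro x y _ _ hx hy
      rw [map_add]
      convert add_mem hx hy using 1; abel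
    · intro c x _ hx
      rw [map_smul, ← smul_sub]
      exact Submodule.smul_mem _ _ hx
  induction k with
  | zero => intro u hu; exact base u (by simpa using hu)
  | succ k ih =>
    intro u hu
    rw [pow_succ'] at hu
    refine Submodule.mul_induction_on hu ?_ ?_
    · intro m hm v hv
      have : algMap A (m * v) - m * v =
        (algMap A m - m) * algMap A v + m * (algMap A v - v) := by
          rw [map_mul]; noncomm_ring
      rw [this]
      refine add_mem ?_ ?_
      · have := Submodule.mul_mem_mul (base m hm) (algMap_augI A (k + 1) hv)
        rwa [← pow_add, show 2 + (k + 1) = k + 1 + 2 by ring] at this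
      · rw [show k + 1 + 2 = (k + 2) + 1 by ring, pow_succ']
        exact Submodule.mul_mem_mul hm (ih v hv)
    · intro x y hx hy
      rw [map_add]
      convert add_mem hx hy using 1; abel

theorem all_pow (A C : MulAut F) (hA : IsIA A) (w : F)
    (h : A (C w) = C w * (w * w)⁻¹) (k : ℕ) :
    MonoidAlgebra.of ℚ F w - 1 ∈ augI F ^ (k + 1) := by
  induction k with
  | zero => simpa using augI_mem w
  | succ k ih =>
    have h1 : MonoidAlgebra.of ℚ F (C w) - 1 ∈ augI F ^ (k + 1) := by
      have := algMap_augI C (k + 1) ih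
      rwa [map_sub, algMap_of, map_one] at this
    have h2 := hA.pow k _ h1
    rw [map_sub, algMap_of, map_one, h, sub_sub_sub_cancel_right] at h2
    have h3 := augI_of_mul (k + 1) (w * w * (C w)⁻¹) h2
    rw [mul_sub, ← map_mul, ← map_mul] at h3
    have e1 : w * w * (C w)⁻¹ * (C w * (w * w)⁻¹) = 1 := by group
    have e2 : w * w * (C w)⁻¹ * C w = w * w := by group
    rw [e1, e2, map_one, map_mul] at h3
    have h4 : (MonoidAlgebra.of ℚ F w - 1) * (MonoidAlgebra.of ℚ F w - 1) ∈
        augI F ^ (k + 1 + 1) := by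
      rw [pow_succ]; exact Submodule.mul_mem_mul ih (augI_mem w)
    have h5 := Submodule.smul_mem _ (-(1/2) : ℚ) (add_mem h3 h4)
    convert h5 using 1
    have : (1 - MonoidAlgebra.of ℚ F w * MonoidAlgebra.of ℚ F w +
      (MonoidAlgebra.of ℚ F w - 1) * (MonoidAlgebra.of ℚ F w - 1)) =
      (-2 : ℚ) • (MonoidAlgebra.of ℚ F w - 1) := by
        rw [neg_smul, two_smul]; noncomm_ring
    rw [this, smul_smul]; norm_num
end algebra

section magnus
open Monoid

/-- Weighted shift operators on sequences. -/
def shiftOp (l : ℕ → Option ℕ) (i : ℕ) : Module.End ℚ (ℕ → ℚ) where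
  toFun f j := if l j = some i then f (j + 1) else 0
  map_add' f g := by ext j; simp only [Pi.add_apply]; split_ifs <;> simp
  map_smul' c f := by ext j; simp

theorem shiftOp_sq (l : ℕ → Option ℕ) (hl : ∀ j i, l j = some i → l (j + 1) ≠ some i) (i : ℕ) :
    shiftOp l i * shiftOp l i = 0 := by
  ext f j
  simp only [shiftOp, Module.End.mul_apply, LinearMap.coe_mk, AddHom.coe_mk]
  split_ifs with h1 h2
  · exact absurd h2 (hl j i h1)
  · rfl
  · rfl

/-- The unipotent representation of the infinite cyclic factor. -/
def shiftRep (l : ℕ → Option ℕ) (hl : ∀ j i, l j = some i → l (j + 1) ≠ some i) (i : ℕ) :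
    Multiplicative ℤ →* Module.End ℚ (ℕ → ℚ) where
  toFun e := 1 + (e.toAdd : ℚ) • shiftOp l i
  map_one' := by simp
  map_mul' a b := by
    rw [mul_add, add_mul, add_mul, smul_mul_smul, shiftOp_sq l hl]
    simp [add_smul]; abel

abbrev FU : ℕ → Type := fun _ => FreeGroup Unit

noncomputable def magRep (l : ℕ → Option ℕ) (hl : ∀ j i, l j = some i → l (j + 1) ≠ some i) :
    CoprodI FU →* Module.End ℚ (ℕ → ℚ) :=
  CoprodI.lift fun i => (shiftRep l hl i).comp
    (FreeGroup.mulEquivIntOfUnique : FreeGroup Unit ≃* Multiplicative ℤ).toMonoidHom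

theorem magRep_of (l : ℕ → Option ℕ) (hl : ∀ j i, l j = some i → l (j + 1) ≠ some i) (i : ℕ)
    (m : FreeGroup Unit) (f : ℕ → ℚ) (j : ℕ) :
    magRep l hl (CoprodI.of (M := FU) (i := i) m) f j =
      f j + ((FreeGroup.mulEquivIntOfUnique (α := Unit) m).toAdd : ℚ) *
        (if l j = some i then f (j + 1) else 0) := by
  simp only [magRep, CoprodI.lift_of]
  rfl

/-- Operators raising the degree by at least `k`. -/
def upOp (k : ℕ) : Submodule ℚ (Module.End ℚ (ℕ → ℚ)) where
  carrier := {T | ∀ (f : ℕ → ℚ) (j : ℕ), (∀ m, j + k ≤ m → f m = 0) → T f j = 0}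
  add_mem' := by
    intro S T hS hT f j hf
    simp [hS f j hf, hT f j hf]
  zero_mem' := by intro f j _; rfl
  smul_mem' := by
    intro c T hT f j hf
    simp [hT f j hf]

theorem upOp_mul (k l : ℕ) : upOp k * upOp l ≤ upOp (k + l) := by
  rw [Submodule.mul_le]
  intro S hS T hT f j hf
  refine hS (T f) j fun m hm => hT f m fun m' hm' => hf m' (by omega)

theorem upOp_pow (k : ℕ) : upOp 1 ^ (k + 1) ≤ upOp (k + 1) := by
  induction k with
  | zero => simp
  | succ k ih =>
    have e : upOp 1 ^ (k + 1 + 1) = upOp 1 ^ (k + 1) * upOp 1 := Submodule.pow_succ ..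
    rw [e]
    exact (mul_le_mul' ih le_rfl).trans (upOp_mul _ _)

theorem one_le_upOp : (1 : Module.End ℚ (ℕ → ℚ)) ∈ upOp 0 := by
  intro f j hf; exact hf j (by omega)

theorem magRep_up (l : ℕ → Option ℕ) (hl : ∀ j i, l j = some i → l (j + 1) ≠ some i)
    (w : CoprodI FU) : magRep l hl w - 1 ∈ upOp 1 := by
  induction w using CoprodI.induction_on with
  | one => simp
  | of i m =>
    intro f j hf
    rw [LinearMap.sub_apply, Pi.sub_apply, magRep_of]
    have : f (j + 1) = 0 := hf _ le_rfl
    simp [this]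
  | mul x y hx hy =>
    have : magRep l hl (x * y) - 1 = (magRep l hl x - 1) * (magRep l hl y - 1) +
      (magRep l hl x - 1) * 1 + 1 * (magRep l hl y - 1) := by
        rw [map_mul]
        simp only [mul_sub, sub_mul, mul_one, one_mul]
        abel
    rw [this]
    refine add_mem (add_mem ?_ ?_) ?_
    · intro f j hf
      exact upOp_mul 1 1 (Submodule.mul_mem_mul hx hy) f j fun m hm => hf m (by omega)
    · simpa using hx
    · simpa using hy

theorem magRep_prod (l : ℕ → Option ℕ) (hl : ∀ j i, l j = some i → l (j + 1) ≠ some i)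
    (L : List (Σ i, FU i)) : ∀ (p : ℕ) (f : ℕ → ℚ),
    (∀ (q : ℕ) (hq : q < L.length), l (p + q) = some (L[q]).1) →
    (∀ x ∈ L, x.2 ≠ 1) → (∀ m, m < p + L.length → f m = 0) → f (p + L.length) ≠ 0 →
    (magRep l hl (L.map fun x => CoprodI.of (M := FU) (i := x.1) x.2).prod f p ≠ 0 ∧
      ∀ m, m < p → magRep l hl (L.map fun x => CoprodI.of (M := FU) (i := x.1) x.2).prod f m = 0)
    := by
  induction L with
  | nil =>
    intro p f _ _ h1 h2
    simpa using ⟨h2, h1⟩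
  | cons x L ih =>
    intro p f h1 h2 h3 h4
    obtain ⟨ih1, ih2⟩ := ih (p + 1) f
      (fun q hq => by
        have := h1 (q + 1) (by simpa using hq)
        simpa [add_assoc, add_comm 1 q] using this)
      (fun y hy => h2 y (List.mem_cons_of_mem _ hy))
      (fun m hm => h3 m (by simp; omega))
      (by simpa [add_assoc, add_comm 1] using h4)
    have hx : ((FreeGroup.mulEquivIntOfUnique (α := Unit) x.2).toAdd : ℚ) ≠ 0 := by
      have := h2 x (by simp)
      intro h
      apply this
      have h' : (FreeGroup.mulEquivIntOfUnique (α := Unit) x.2).toAdd = 0 := by exact_mod_cast h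
      have h'' : FreeGroup.mulEquivIntOfUnique (α := Unit) x.2 = 1 := h'
      simpa using h''
    have hlp : l p = some x.1 := h1 0 (by simp)
    simp only [List.map_cons, List.prod_cons, map_mul, Module.End.mul_apply, magRep_of]
    constructor
    · rw [ih2 p (by omega), if_pos hlp, zero_add]
      exact mul_ne_zero hx ih1
    · intro m hm
      rw [ih2 m (by omega), ih2 (m + 1) (by omega)]
      simp

theorem coprod_residual (w : CoprodI FU)
    (h : ∀ k, MonoidAlgebra.of ℚ _ w - 1 ∈ augI (CoprodI FU) ^ (k + 1)) : w = 1 := by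
  classical
  obtain ⟨W, rfl⟩ : ∃ W : CoprodI.Word FU, W.prod = w :=
    ⟨CoprodI.Word.equiv w, CoprodI.Word.equiv.symm_apply_apply w⟩
  by_cases hL : W.toList = []
  · simp [CoprodI.Word.prod, hL]
  exfalso
  let l : ℕ → Option ℕ := fun j => (W.toList[j]?).map Sigma.fst
  have hl : ∀ j i, l j = some i → l (j + 1) ≠ some i := by
    intro j i h1 h2
    simp only [l, Option.map_eq_some_iff, List.getElem?_eq_some_iff] at h1 h2
    obtain ⟨a, ⟨ha, rfl⟩, rfl⟩ := h1
    obtain ⟨b, ⟨hb, rfl⟩, hb2⟩ := h2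
    exact (List.isChain_iff_getElem.1 W.chain_ne j hb) hb2.symm
  set r := W.toList.length with hr
  have hr0 : 0 < r := List.length_pos_iff.2 hL
  let R : MonoidAlgebra ℚ (CoprodI FU) →ₐ[ℚ] Module.End ℚ (ℕ → ℚ) :=
    MonoidAlgebra.lift ℚ _ _ (magRep l hl)
  have hR : ∀ g, R (MonoidAlgebra.of ℚ _ g) = magRep l hl g := fun g => by simp [R]
  have m1 : (augI (CoprodI FU)).map R.toLinearMap ≤ upOp 1 := by
    rw [augI, Submodule.map_span, Submodule.span_le]
    rintro _ ⟨_, ⟨g, rfl⟩, rfl⟩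
    have : R (MonoidAlgebra.of ℚ _ g - 1) = magRep l hl g - 1 := by
      rw [map_sub, hR, map_one]
    simp only [AlgHom.toLinearMap_apply, this]
    exact magRep_up l hl g
  have m2 : R (MonoidAlgebra.of ℚ _ W.prod - 1) ∈ upOp (r + 1) := by
    apply upOp_pow
    have : (augI (CoprodI FU) ^ (r + 1)).map R.toLinearMap ≤ upOp 1 ^ (r + 1) := by
      rw [Submodule.map_pow]; exact pow_le_pow_left' m1 _
    exact this ⟨_, h r, rfl⟩
  rw [map_sub, hR, map_one] at m2
  have := m2 (Pi.single r 1) 0 (fun m hm => by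
    rw [Pi.single_apply, if_neg (by omega)])
  rw [LinearMap.sub_apply, Pi.sub_apply, Module.End.one_apply, Pi.single_apply,
    if_neg (by omega), sub_zero] at this
  refine (magRep_prod l hl W.toList 0 (Pi.single r 1) ?_ W.ne_one ?_ ?_).1 this
  · intro q hq
    simp [l, hq]
  · intro m hm
    rw [Pi.single_apply, if_neg (by omega)]
  · rw [zero_add, ← hr]; simp

theorem free_residual (w : FreeGroup ℕ)
    (h : ∀ k, MonoidAlgebra.of ℚ _ w - 1 ∈ augI (FreeGroup ℕ) ^ (k + 1)) : w = 1 := by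
  let e : FreeGroup ℕ ≃* CoprodI FU := freeGroupEquivCoprodI
  let R : MonoidAlgebra ℚ (FreeGroup ℕ) →ₐ[ℚ] MonoidAlgebra ℚ (CoprodI FU) :=
    MonoidAlgebra.mapDomainAlgHom ℚ ℚ e.toMonoidHom
  have hR : ∀ g, R (MonoidAlgebra.of ℚ _ g) = MonoidAlgebra.of ℚ _ (e g) := fun g => by simp [R]
  have m1 : (augI (FreeGroup ℕ)).map R.toLinearMap ≤ augI (CoprodI FU) := by
    conv_lhs => rw [augI, Submodule.map_span]
    rw [Submodule.span_le]
    rintro _ ⟨_, ⟨g, rfl⟩, rfl⟩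
    have : R (MonoidAlgebra.of ℚ _ g - 1) = MonoidAlgebra.of ℚ _ (e g) - 1 := by
      rw [map_sub, hR, map_one]
    simp only [AlgHom.toLinearMap_apply, this]
    exact augI_mem _
  have : e w = 1 := by
    apply coprod_residual
    intro k
    have h2 : (augI (FreeGroup ℕ) ^ (k + 1)).map R.toLinearMap ≤ augI (CoprodI FU) ^ (k + 1) := by
      rw [Submodule.map_pow]; exact pow_le_pow_left' m1 _
    have h3 := h2 ⟨_, h k, rfl⟩
    rwa [AlgHom.toLinearMap_apply, map_sub, hR, map_one] at h3
  simpa using this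
end magnus

section artin

/-- Artin generator on the free group: `x_j ↦ x_{j+1}`, `x_{j+1} ↦ x_{j+1}⁻¹ x_j x_{j+1}`. -/
def artF (j : ℕ) : FreeGroup ℕ →* FreeGroup ℕ := FreeGroup.lift fun i =>
  if i = j then FreeGroup.of (j + 1) else if i = j + 1 then
    (FreeGroup.of (j + 1))⁻¹ * FreeGroup.of j * FreeGroup.of (j + 1) else FreeGroup.of i

/-- Inverse of the Artin generator. -/
def artG (j : ℕ) : FreeGroup ℕ →* FreeGroup ℕ := FreeGroup.lift fun i =>
  if i = j then FreeGroup.of j * FreeGroup.of (j + 1) * (FreeGroup.of j)⁻¹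
  else if i = j + 1 then FreeGroup.of j else FreeGroup.of i

theorem artF_of (j i : ℕ) : artF j (FreeGroup.of i) =
  if i = j then FreeGroup.of (j + 1) else if i = j + 1 then
    (FreeGroup.of (j + 1))⁻¹ * FreeGroup.of j * FreeGroup.of (j + 1) else FreeGroup.of i := by
  simp [artF]

theorem artG_of (j i : ℕ) : artG j (FreeGroup.of i) =
  if i = j then FreeGroup.of j * FreeGroup.of (j + 1) * (FreeGroup.of j)⁻¹
  else if i = j + 1 then FreeGroup.of j else FreeGroup.of i := by
  simp [artG]

/-- Artin automorphism. -/
def art (j : ℕ) : MulAut (FreeGroup ℕ) :=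
  MonoidHom.toMulEquiv (artF j) (artG j)
    (by
      ext i
      simp only [MonoidHom.comp_apply, artF_of, MonoidHom.id_apply]
      split_ifs with h1 h2
      · subst h1; simp [artG_of]
      · subst h2; simp [artG_of, mul_assoc]
      · simp [artG_of, h1, h2])
    (by
      ext i
      simp only [MonoidHom.comp_apply, artG_of, MonoidHom.id_apply]
      split_ifs with h1 h2
      · subst h1; simp [artF_of, mul_assoc]
      · subst h2; simp [artF_of]
      · simp [artF_of, h1, h2])

theorem art_of (j i : ℕ) : art j (FreeGroup.of i) =
  if i = j then FreeGroup.of (j + 1) else if i = j + 1 then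
    (FreeGroup.of (j + 1))⁻¹ * FreeGroup.of j * FreeGroup.of (j + 1) else FreeGroup.of i :=
  artF_of j i

theorem art_of_self (j : ℕ) : art j (FreeGroup.of j) = FreeGroup.of (j + 1) := by simp [art_of]

theorem art_of_succ (j : ℕ) : art j (FreeGroup.of (j + 1)) =
    (FreeGroup.of (j + 1))⁻¹ * FreeGroup.of j * FreeGroup.of (j + 1) := by simp [art_of]

theorem art_of_ne (j i : ℕ) (h : i ≠ j) (h' : i ≠ j + 1) :
    art j (FreeGroup.of i) = FreeGroup.of i := by simp [art_of, h, h']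

theorem mulAut_ext {A B : MulAut (FreeGroup ℕ)}
    (h : ∀ i, A (FreeGroup.of i) = B (FreeGroup.of i)) : A = B := by
  have : A.toMonoidHom = B.toMonoidHom := FreeGroup.ext_hom _ _ h
  ext x
  exact DFunLike.congr_fun this x

theorem art_comm (j k : ℕ) (h : j + 2 ≤ k) : art j * art k = art k * art j := by
  apply mulAut_ext
  intro i
  simp only [MulAut.mul_apply]
  by_cases h1 : i = j
  · subst h1
    rw [art_of_ne k i (by omega) (by omega), art_of_self, art_of_ne k _ (by omega) (by omega)]
  by_cases h2 : i = j + 1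
  · subst h2
    rw [art_of_ne k _ (by omega) (by omega), art_of_succ]
    simp only [map_mul, map_inv]
    rw [art_of_ne k _ (by omega) (by omega), art_of_ne k _ (by omega) (by omega)]
  rw [art_of_ne j i h1 h2]
  by_cases h3 : i = k
  · subst h3
    rw [art_of_self, art_of_ne j _ (by omega) (by omega)]
  by_cases h4 : i = k + 1
  · subst h4
    rw [art_of_succ]
    simp only [map_mul, map_inv]
    rw [art_of_ne j _ (by omega) (by omega), art_of_ne j _ (by omega) (by omega)]
  rw [art_of_ne k i h3 h4, art_of_ne j i h1 h2]

theorem art_braid (j : ℕ) : art j * art (j + 1) * art j = art (j + 1) * art j * art (j + 1) := by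
  apply mulAut_ext
  intro i
  simp only [MulAut.mul_apply]
  have a1 := art_of_self j
  have a2 := art_of_succ j
  have a3 : art j (FreeGroup.of (j + 1 + 1)) = FreeGroup.of (j + 1 + 1) :=
    art_of_ne j _ (by omega) (by omega)
  have b1 := art_of_self (j + 1)
  have b2 := art_of_succ (j + 1)
  have b3 : art (j + 1) (FreeGroup.of j) = FreeGroup.of j :=
    art_of_ne _ _ (by omega) (by omega)
  by_cases h1 : i = j
  · subst h1
    simp only [a1, b1, a3, b3]
  by_cases h2 : i = j + 1
  · subst h2
    simp only [a1, a2, a3, b1, b2, b3, map_mul, map_inv]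
  by_cases h3 : i = j + 1 + 1
  · subst h3
    simp only [a1, a2, a3, b1, b2, b3, map_mul, map_inv]
    group
  rw [art_of_ne j i h1 h2, art_of_ne (j + 1) i h2 h3, art_of_ne j i h1 h2,
    art_of_ne (j + 1) i h2 h3]

/-- The holomorph of the free group. -/
abbrev Hol : Type := SemidirectProduct (FreeGroup ℕ) (MulAut (FreeGroup ℕ)) (MonoidHom.id _)

/-- Images of the standard generators of the type `B` Artin group. -/
def holGen : ℕ → Hol
  | 0 => SemidirectProduct.inl (FreeGroup.of 0)
  | k + 1 => SemidirectProduct.inr (art k)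

theorem holGen_four : (holGen 0 * holGen 1) ^ 2 = (holGen 1 * holGen 0) ^ 2 := by
  have a1 := art_of_self 0
  have a2 := art_of_succ 0
  rw [zero_add] at a1 a2
  ext1
  · simp [holGen, pow_two, a1, a2, mul_assoc]
  · simp [holGen, pow_two]

theorem holGen_braid (k : ℕ) (hk : 1 ≤ k) :
    holGen k * holGen (k + 1) * holGen k = holGen (k + 1) * holGen k * holGen (k + 1) := by
  obtain ⟨k, rfl⟩ : ∃ m, k = m + 1 := ⟨k - 1, by omega⟩
  simp only [holGen, ← map_mul, art_braid]

theorem holGen_comm (k l : ℕ) (h : k + 2 ≤ l) : holGen k * holGen l = holGen l * holGen k := by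
  obtain ⟨l, rfl⟩ : ∃ m, l = m + 1 := ⟨l - 1, by omega⟩
  rcases k with _ | k
  · ext1
    · simp [holGen, art_of_ne l 0 (by omega) (by omega)]
    · simp [holGen]
  · simp only [holGen, ← map_mul, art_comm k l (by omega)]

/-- The conjugation action of the holomorph on the free group. -/
def holAct : Hol →* MulAut (FreeGroup ℕ) :=
  SemidirectProduct.lift MulAut.conj (MonoidHom.id _) (by
    intro A
    ext u x
    simp)

theorem holAct_spec (g : Hol) (w : FreeGroup ℕ) :
    g * SemidirectProduct.inl w * g⁻¹ = SemidirectProduct.inl (holAct g w) := by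
  ext1
  · simp [holAct, SemidirectProduct.lift]
  · simp
end artin

section dsep
/-- Signed permutation generators as functions on `ℤ`. -/
def sgnA (i : ℕ) (x : ℤ) : ℤ :=
  if i = 0 then
    (if x = 1 then -2 else if x = 2 then -1 else if x = -1 then 2 else if x = -2 then 1 else x)
  else (if x = i then i + 1 else if x = i + 1 then i else
    if x = -i then -(i + 1) else if x = -(i + 1) then -i else x)

theorem sgnA_zero (x : ℤ) : (x = 1 ∧ sgnA 0 x = -2) ∨ (x = 2 ∧ sgnA 0 x = -1) ∨
    (x = -1 ∧ sgnA 0 x = 2) ∨ (x = -2 ∧ sgnA 0 x = 1) ∨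
    (x ≠ 1 ∧ x ≠ 2 ∧ x ≠ -1 ∧ x ≠ -2 ∧ sgnA 0 x = x) := by
  simp only [sgnA]
  split_ifs <;> omega

theorem sgnA_pos (i : ℕ) (hi : 1 ≤ i) (x : ℤ) : (x = i ∧ sgnA i x = i + 1) ∨
    (x = i + 1 ∧ sgnA i x = i) ∨ (x = -i ∧ sgnA i x = -i - 1) ∨ (x = -i - 1 ∧ sgnA i x = -i) ∨
    (x ≠ i ∧ x ≠ i + 1 ∧ x ≠ -i ∧ x ≠ -i - 1 ∧ sgnA i x = x) := by
  simp only [sgnA]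
  split_ifs <;> omega

theorem sgnA_inv (i : ℕ) : Function.Involutive (sgnA i) := by
  intro x
  rcases Nat.eq_zero_or_pos i with rfl | hi
  · have h1 := sgnA_zero x
    have h2 := sgnA_zero (sgnA 0 x)
    omega
  · have h1 := sgnA_pos i hi x
    have h2 := sgnA_pos i hi (sgnA i x)
    omega

/-- Signed permutation generators. -/
def sgnP (i : ℕ) : Equiv.Perm ℤ := (sgnA_inv i).toPerm

theorem sgnP_apply (i : ℕ) (x : ℤ) : sgnP i x = sgnA i x := rfl

theorem sgn_braid (i : ℕ) (hi : 1 ≤ i) :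
    sgnP i * sgnP (i + 1) * sgnP i = sgnP (i + 1) * sgnP i * sgnP (i + 1) := by
  ext x
  simp only [Equiv.Perm.mul_apply, sgnP_apply]
  have p := sgnA_pos i hi
  have q := sgnA_pos (i + 1) (by omega)
  push_cast at q
  rcases p x with p1 | p1 | p1 | p1 | p1 <;> rcases q x with q1 | q1 | q1 | q1 | q1 <;>
    first | (exfalso; omega) | skip
  all_goals
    rcases p (sgnA (i + 1) x) with p2 | p2 | p2 | p2 | p2 <;> first | (exfalso; omega) | skip
  all_goals
    rcases q (sgnA i x) with q2 | q2 | q2 | q2 | q2 <;> first | (exfalso; omega) | skip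
  all_goals
    have p3 := p (sgnA (i + 1) (sgnA i x))
    have q3 := q (sgnA i (sgnA (i + 1) x))
    omega

theorem sgn_braid0 : sgnP 0 * sgnP 2 * sgnP 0 = sgnP 2 * sgnP 0 * sgnP 2 := by
  ext x
  simp only [Equiv.Perm.mul_apply, sgnP_apply]
  have p := sgnA_zero
  have q := sgnA_pos 2 (by omega)
  push_cast at q
  rcases p x with p1 | p1 | p1 | p1 | p1 <;> rcases q x with q1 | q1 | q1 | q1 | q1 <;>
    first | (exfalso; omega) | skip
  all_goals
    rcases p (sgnA 2 x) with p2 | p2 | p2 | p2 | p2 <;> first | (exfalso; omega) | skip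
  all_goals
    rcases q (sgnA 0 x) with q2 | q2 | q2 | q2 | q2 <;> first | (exfalso; omega) | skip
  all_goals
    have p3 := p (sgnA 2 (sgnA 0 x))
    have q3 := q (sgnA 0 (sgnA 2 x))
    omega

theorem sgn_comm01 : sgnP 0 * sgnP 1 = sgnP 1 * sgnP 0 := by
  ext x
  simp only [Equiv.Perm.mul_apply, sgnP_apply]
  have p1 := sgnA_zero x
  have p2 := sgnA_zero (sgnA 1 x)
  have q1 := sgnA_pos 1 le_rfl x
  have q2 := sgnA_pos 1 le_rfl (sgnA 0 x)
  push_cast at q1 q2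
  rcases p1 with p1 | p1 | p1 | p1 | p1 <;> rcases q1 with q1 | q1 | q1 | q1 | q1 <;>
    first | (exfalso; omega) | omega

theorem sgn_comm (i j : ℕ) (hi : 1 ≤ i) (hj : i + 2 ≤ j) :
    sgnP i * sgnP j = sgnP j * sgnP i := by
  ext x
  simp only [Equiv.Perm.mul_apply, sgnP_apply]
  have p1 := sgnA_pos i hi x
  have p2 := sgnA_pos i hi (sgnA j x)
  have q1 := sgnA_pos j (by omega) x
  have q2 := sgnA_pos j (by omega) (sgnA i x)
  rcases p1 with p1 | p1 | p1 | p1 | p1 <;> rcases q1 with q1 | q1 | q1 | q1 | q1 <;>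
    first | (exfalso; omega) | omega

theorem sgn_comm0 (j : ℕ) (hj : 3 ≤ j) : sgnP 0 * sgnP j = sgnP j * sgnP 0 := by
  ext x
  simp only [Equiv.Perm.mul_apply, sgnP_apply]
  have p1 := sgnA_zero x
  have p2 := sgnA_zero (sgnA j x)
  have q1 := sgnA_pos j (by omega) x
  have q2 := sgnA_pos j (by omega) (sgnA 0 x)
  rcases p1 with p1 | p1 | p1 | p1 | p1 <;> rcases q1 with q1 | q1 | q1 | q1 | q1 <;>
    first | (exfalso; omega) | omega

theorem sgn_ne : sgnP 0 ≠ sgnP 1 := by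
  intro h
  have := DFunLike.congr_fun h 1
  simp [sgnP_apply, sgnA] at this
end dsep

section main5

/-- Generators of the type `B` Artin group, indexed by `ℕ`. -/
def bb (n k : ℕ) : PresentedGroup (typeBRels n) :=
  if h : k < n then PresentedGroup.of ⟨k, h⟩ else 1

theorem bb_lt (n k : ℕ) (h : k < n) : bb n k = PresentedGroup.of ⟨k, h⟩ := by simp [bb, h]

theorem bb_comm (n : ℕ) (k l : ℕ) (h : k + 2 ≤ l) : bb n k * bb n l = bb n l * bb n k := by
  by_cases hl : l < n
  · rw [bb_lt n l hl, bb_lt n k (by omega)]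
    have := PresentedGroup.one_of_mem (rels := typeBRels n)
      (x := commWord (FreeGroup.of ⟨k, by omega⟩) (FreeGroup.of ⟨l, hl⟩))
      ⟨⟨k, by omega⟩, ⟨l, hl⟩, Or.inr (Or.inr ⟨h, rfl⟩)⟩
    simp only [commWord, map_mul, map_inv] at this
    exact mul_inv_eq_iff_eq_mul.1 (mul_inv_eq_one.1 this)
  · simp [bb, hl]

theorem bb_braid (n : ℕ) (k : ℕ) (h1 : 1 ≤ k) (h : k + 1 < n) :
    bb n k * bb n (k + 1) * bb n k = bb n (k + 1) * bb n k * bb n (k + 1) := by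
  rw [bb_lt n k (by omega), bb_lt n _ h]
  have := PresentedGroup.one_of_mem (rels := typeBRels n)
    (x := braidWord (FreeGroup.of ⟨k, by omega⟩) (FreeGroup.of ⟨k + 1, h⟩))
    ⟨⟨k, by omega⟩, ⟨k + 1, h⟩, Or.inr (Or.inl ⟨h1, rfl, rfl⟩)⟩
  simp only [braidWord, map_mul, map_inv] at this
  exact mul_inv_eq_one.1 this

theorem bb_four (n : ℕ) (h : 2 ≤ n) : (bb n 0 * bb n 1) ^ 2 = (bb n 1 * bb n 0) ^ 2 := by
  rw [bb_lt n 0 (by omega), bb_lt n 1 (by omega)]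
  have := PresentedGroup.one_of_mem (rels := typeBRels n)
    (x := (FreeGroup.of ⟨0, by omega⟩ * FreeGroup.of ⟨1, by omega⟩) ^ 2 *
      ((FreeGroup.of ⟨1, by omega⟩ * FreeGroup.of ⟨0, by omega⟩) ^ 2)⁻¹)
    ⟨⟨0, by omega⟩, ⟨1, by omega⟩, Or.inl ⟨rfl, rfl, rfl⟩⟩
  simp only [map_mul, map_inv, map_pow] at this
  exact mul_inv_eq_one.1 this

theorem holGen_rels (n : ℕ) : ∀ r ∈ typeBRels n,
    FreeGroup.lift (fun i : Fin n => holGen i) r = 1 := by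
  rintro r ⟨i, j, ⟨h1, h2, rfl⟩ | ⟨h1, h2, rfl⟩ | ⟨h1, rfl⟩⟩
  · simp only [map_mul, map_inv, map_pow, FreeGroup.lift_apply_of, h1, h2]
    exact mul_inv_eq_one.2 holGen_four
  · simp only [braidWord, map_mul, map_inv, FreeGroup.lift_apply_of, ← h2]
    exact mul_inv_eq_one.2 (holGen_braid _ h1)
  · simp only [commWord, map_mul, map_inv, FreeGroup.lift_apply_of]
    rw [holGen_comm _ _ h1]; group

/-- The representation of the type `B` Artin group in the holomorph. -/
def toHol (n : ℕ) : PresentedGroup (typeBRels n) →* Hol :=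
  PresentedGroup.toGroup (holGen_rels n)

theorem toHol_bb (n k : ℕ) (h : k < n) : toHol n (bb n k) = holGen k := by
  rw [bb_lt n k h]; exact PresentedGroup.toGroup.of _

theorem toHol_XX (n k : ℕ) (h : k < n) :
    toHol n (XX (bb n) k) = SemidirectProduct.inl (FreeGroup.of k) := by
  induction k with
  | zero => simp only [XX]; rw [toHol_bb n 0 h]; rfl
  | succ k ih =>
    simp only [XX, map_mul, map_inv]
    rw [ih (by omega), toHol_bb n _ h, holAct_spec]
    have : holAct (holGen (k + 1)) = art k := SemidirectProduct.lift_inr ..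
    rw [this, art_of_self]

/-- The inclusion of the free kernel. -/
def iotaB (n : ℕ) : FreeGroup (Fin n) →* PresentedGroup (typeBRels n) :=
  FreeGroup.lift fun i : Fin n => XX (bb n) i

theorem toHol_iota (n : ℕ) (w : FreeGroup (Fin n)) :
    toHol n (iotaB n w) = SemidirectProduct.inl (FreeGroup.map Fin.val w) := by
  have : (toHol n).comp (iotaB n) = SemidirectProduct.inl.comp (FreeGroup.map Fin.val) := by
    apply FreeGroup.ext_hom
    intro i
    simp [iotaB, toHol_XX n i i.2]
  exact DFunLike.congr_fun this w

theorem iota_range (n : ℕ) :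
    (iotaB n).range = Subgroup.closure {x | ∃ i, i < n ∧ x = XX (bb n) i} := by
  rw [iotaB, FreeGroup.range_lift_eq_closure]
  congr 1
  ext x
  constructor
  · rintro ⟨i, rfl⟩; exact ⟨i, i.2, rfl⟩
  · rintro ⟨i, hi, rfl⟩; exact ⟨⟨i, hi⟩, rfl⟩

theorem sec_rels (n : ℕ) : ∀ r ∈ braidRels (n - 1),
    FreeGroup.lift (fun i : Fin (n - 1) => bb n (i + 1)) r = 1 := by
  rintro r ⟨i, j, ⟨h2, rfl⟩ | ⟨h1, rfl⟩⟩
  · simp only [braidWord, map_mul, map_inv, FreeGroup.lift_apply_of, ← h2]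
    exact mul_inv_eq_one.2 (bb_braid n _ (by omega) (by omega))
  · simp only [commWord, map_mul, map_inv, FreeGroup.lift_apply_of]
    rw [bb_comm n _ _ (by omega : (i : ℕ) + 1 + 2 ≤ (j : ℕ) + 1)]; group

/-- The standard section of the type `B` projection. -/
def secB (n : ℕ) : PresentedGroup (braidRels (n - 1)) →* PresentedGroup (typeBRels n) :=
  PresentedGroup.toGroup (sec_rels n)

theorem secB_norm (n : ℕ) (hn : 4 ≤ n) (v : PresentedGroup (braidRels (n - 1))) :
    secB n v ∈ Subgroup.normalizer ((iotaB n).range : Set (PresentedGroup (typeBRels n))) := by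
  have := PresentedGroup.generated_by (braidRels (n - 1))
    ((Subgroup.normalizer ((iotaB n).range : Set (PresentedGroup (typeBRels n)))).comap (secB n))
    (by
      intro j
      rw [Subgroup.mem_comap]
      have e : secB n (PresentedGroup.of j) = bb n (j + 1) := PresentedGroup.toGroup.of _
      rw [e]
      exact XX_conj (bb n) n (by omega) (bb_comm n) (bb_braid n) (bb_four n (by omega)) _
        (iota_range n) j (by omega)) v
  exact this

theorem ker_sub_range (n : ℕ) (hn : 4 ≤ n)
    (πB : PresentedGroup (typeBRels n) →* PresentedGroup (braidRels (n - 1)))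
    (hπB1 : ∀ i : Fin n, (i : ℕ) = 0 → πB (PresentedGroup.of i) = 1)
    (hπB2 : ∀ (i : Fin n) (j : Fin (n - 1)), (i : ℕ) = (j : ℕ) + 1 →
      πB (PresentedGroup.of i) = PresentedGroup.of j)
    (y : PresentedGroup (typeBRels n)) (hy : πB y = 1) : ∃ w, iotaB n w = y := by
  set H := (iotaB n).range with hH
  have h0 : ∀ g ∈ H, ∀ v c, c ∈ H → g * secB n v * c * (secB n v)⁻¹ ∈ H := by
    intro g hg v c hc
    have := (Subgroup.mem_normalizer_iff.1 (secB_norm n hn v) c).1 hc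
    have := H.mul_mem hg this
    simpa only [mul_assoc] using this
  have hgen : ∀ i : Fin n, (PresentedGroup.of i ∈ H ∧ πB (PresentedGroup.of i) = 1) ∨
      secB n (πB (PresentedGroup.of i)) = PresentedGroup.of i := by
    intro i
    rcases Nat.eq_zero_or_pos (i : ℕ) with h | h
    · left
      refine ⟨⟨FreeGroup.of i, ?_⟩, hπB1 i h⟩
      simp only [iotaB, FreeGroup.lift_apply_of, h, XX]
      rw [bb_lt n 0 (by omega)]
      congr 1
      exact Fin.ext h.symm
    · right
      rw [hπB2 i ⟨i - 1, by omega⟩ (by simp; omega)]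
      refine (PresentedGroup.toGroup.of _).trans ?_
      simp only
      rw [bb_lt n _ (by omega)]
      congr 1
      exact Fin.ext (by simp; omega)
  have key : ∀ g : PresentedGroup (typeBRels n), g * (secB n (πB g))⁻¹ ∈ H := by
    intro g
    have hg : g ∈ Subgroup.closure (Set.range (PresentedGroup.of (rels := typeBRels n))) := by
      rw [PresentedGroup.closure_range_of]; trivial
    induction hg using Subgroup.closure_induction_right with
    | one => simp
    | mul_right x hx y hy ih =>
      obtain ⟨i, rfl⟩ := hy
      rcases hgen i with ⟨h1, h2⟩ | h1
      · have := h0 _ ih (πB x) _ h1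
        rw [map_mul, h2, mul_one]
        simpa [mul_assoc] using this
      · rw [map_mul, map_mul, h1]; simpa [mul_assoc] using ih
    | mul_inv_cancel x hx y hy ih =>
      obtain ⟨i, rfl⟩ := hy
      rcases hgen i with ⟨h1, h2⟩ | h1
      · have := h0 _ ih (πB x) _ (H.inv_mem h1)
        rw [map_mul, map_inv, h2, inv_one, mul_one]
        simpa [mul_assoc] using this
      · rw [map_mul, map_mul, map_inv, map_inv, h1]; simpa [mul_assoc] using ih
  have := key y
  rw [hy] at this
  simpa [hH] using this

theorem art_sq_IA (j : ℕ) : IsIA (art j * art j) := by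
  apply isIA_of_gens
  intro i
  simp only [MulAut.mul_apply]
  by_cases h1 : i = j
  · subst h1
    exact ⟨(FreeGroup.of (i + 1))⁻¹, by rw [art_of_self, art_of_succ, inv_inv]⟩
  by_cases h2 : i = j + 1
  · subst h2
    refine ⟨(FreeGroup.of (j + 1))⁻¹ * (FreeGroup.of j)⁻¹, ?_⟩
    rw [art_of_succ]
    simp only [map_mul, map_inv, art_of_succ, art_of_self]
    group
  · exact ⟨1, by simp [art_of_ne j i h1 h2]⟩

theorem aut_sq_IA (u : FreeGroup ℕ) (θ : MulAut (FreeGroup ℕ)) (h : IsIA (θ * θ)) :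
    IsIA ((MulAut.conj u * θ) * (MulAut.conj u * θ)) := by
  have : (MulAut.conj u * θ) * (MulAut.conj u * θ) =
      MulAut.conj u * MulAut.conj (θ u) * (θ * θ) := by
    ext x
    simp [mul_assoc]
  rw [this]
  exact ((isIA_conj _).mul (isIA_conj _)).mul h

/-- Core: the two commuting elements coincide. -/
theorem core_eq (n : ℕ) (hn : 4 ≤ n)
    (πB : PresentedGroup (typeBRels n) →* PresentedGroup (braidRels (n - 1)))
    (hπB1 : ∀ i : Fin n, (i : ℕ) = 0 → πB (PresentedGroup.of i) = 1)
    (hπB2 : ∀ (i : Fin n) (j : Fin (n - 1)), (i : ℕ) = (j : ℕ) + 1 →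
      πB (PresentedGroup.of i) = PresentedGroup.of j)
    (a b c : PresentedGroup (typeBRels n)) (hab : a * b = b * a)
    (hac : a * c * a = c * a * c) (hbc : b * c * b = c * b * c)
    (ha : πB a = πB (bb n 1)) (hb : πB b = πB a) : a = b := by
  obtain ⟨w, hw⟩ := ker_sub_range n hn πB hπB1 hπB2 (a * b⁻¹) (by simp [hb])
  obtain ⟨u, hu⟩ := ker_sub_range n hn πB hπB1 hπB2 (a * (bb n 1)⁻¹) (by simp [ha])
  set w' := FreeGroup.map Fin.val w with hw'
  set u' := FreeGroup.map Fin.val u with hu'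
  have e1 : toHol n (a * b⁻¹) = SemidirectProduct.inl w' := by rw [← hw, toHol_iota]
  have e2 : toHol n a = SemidirectProduct.inl u' * holGen 1 := by
    have : a = iotaB n u * bb n 1 := by rw [hu]; group
    rw [this, map_mul, toHol_iota, toHol_bb n 1 (by omega)]
  set A := holAct (toHol n a) with hA
  set C := holAct (toHol n c) with hC
  have hAe : A = MulAut.conj u' * art 0 := by
    have i1 : holAct (SemidirectProduct.inl u') = MulAut.conj u' := SemidirectProduct.lift_inl ..
    have i2 : holAct (holGen 1) = art 0 := SemidirectProduct.lift_inr ..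
    rw [hA, e2, map_mul, i1, i2]
  have hIA : IsIA (A * A) := by
    rw [hAe]; exact aut_sq_IA _ _ (art_sq_IA 0)
  -- the relation
  have r1 : a * (c * (a * b⁻¹) * c⁻¹) * a⁻¹ = (c * (a * b⁻¹) * c⁻¹) * (a * b⁻¹)⁻¹ := by
    have h2 : c * b⁻¹ * c⁻¹ = b⁻¹ * c⁻¹ * b := by
      have : c * b * (b⁻¹ * c⁻¹ * b) * (c * b) = c * b * (c * b⁻¹ * c⁻¹) * (c * b) := by
        have x1 : c * b * (b⁻¹ * c⁻¹ * b) * (c * b) = b * c * b := by group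
        rw [x1, hbc]; group
      exact (mul_left_cancel (mul_right_cancel this)).symm
    calc a * (c * (a * b⁻¹) * c⁻¹) * a⁻¹ = (a * c * a) * b⁻¹ * c⁻¹ * a⁻¹ := by group
      _ = c * a * (c * b⁻¹ * c⁻¹) * a⁻¹ := by rw [hac]; group
      _ = _ := by rw [h2]; group
  have r2 : a * (a * b⁻¹) * a⁻¹ = a * b⁻¹ := by
    have : a * b⁻¹ = b⁻¹ * a := (Commute.inv_right (show Commute a b from hab)).eq
    calc a * (a * b⁻¹) * a⁻¹ = a * (b⁻¹ * a) * a⁻¹ := by rw [this]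
      _ = _ := by group
  have f1 : A (C w') = C w' * w'⁻¹ := by
    have r := r1
    have e := e1
    generalize a * b⁻¹ = y at r e
    have h := congrArg (toHol n) r
    simp only [map_mul, map_inv, e] at h
    rw [holAct_spec, holAct_spec, ← map_inv, ← map_mul] at h
    exact SemidirectProduct.inl_injective h
  have f2 : A w' = w' := by
    have := congrArg (toHol n) r2
    rw [map_mul, map_mul, map_inv, e1, holAct_spec] at this
    exact SemidirectProduct.inl_injective this
  have f3 : (A * A) (C w') = C w' * (w' * w')⁻¹ := by
    simp [MulAut.mul_apply, f1, f2, mul_assoc]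
  have hw1 : w' = 1 := free_residual w' (all_pow (A * A) C hIA w' f3)
  have hw2 : w = 1 := by
    apply FreeGroup.map_injective Fin.val_injective
    rw [← hw', hw1, map_one]
  rw [hw2, map_one] at hw
  exact (mul_inv_eq_one.1 hw.symm)

theorem sgn_rels (n : ℕ) : ∀ r ∈ typeDRels n,
    FreeGroup.lift (fun i : Fin n => sgnP i) r = 1 := by
  rintro r ⟨i, j, ⟨h1, h2, rfl⟩ | ⟨h1, h2, rfl⟩ | ⟨h1, h2, rfl⟩ | ⟨h1, h2, rfl⟩ |
    ⟨h1, h2, rfl⟩ | ⟨h1, h2, rfl⟩⟩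
  · simp only [commWord, map_mul, map_inv, FreeGroup.lift_apply_of, h1, h2]
    rw [sgn_comm01]; group
  · simp only [braidWord, map_mul, map_inv, FreeGroup.lift_apply_of, h1, h2]
    exact mul_inv_eq_one.2 sgn_braid0
  · simp only [braidWord, map_mul, map_inv, FreeGroup.lift_apply_of, h1, h2]
    exact mul_inv_eq_one.2 (sgn_braid 1 le_rfl)
  · simp only [braidWord, map_mul, map_inv, FreeGroup.lift_apply_of, ← h2]
    exact mul_inv_eq_one.2 (sgn_braid _ (by omega))
  · simp only [commWord, map_mul, map_inv, FreeGroup.lift_apply_of, h1]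
    rw [sgn_comm0 _ h2]; group
  · simp only [commWord, map_mul, map_inv, FreeGroup.lift_apply_of]
    rw [sgn_comm _ _ h1 h2]; group

theorem delta_ne (n : ℕ) (i j : Fin n) (hi : (i : ℕ) = 0) (hj : (j : ℕ) = 1) :
    (PresentedGroup.of i : PresentedGroup (typeDRels n)) ≠ PresentedGroup.of j := by
  intro h
  have := congrArg (PresentedGroup.toGroup (sgn_rels n)) h
  rw [PresentedGroup.toGroup.of, PresentedGroup.toGroup.of, hi, hj] at this
  exact sgn_ne this

theorem delta_rels (n : ℕ) (i j k : Fin n) (hi : (i : ℕ) = 0) (hj : (j : ℕ) = 1)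
    (hk : (k : ℕ) = 2) (a b c : PresentedGroup (typeDRels n)) (ha : a = PresentedGroup.of i)
    (hb : b = PresentedGroup.of j) (hc : c = PresentedGroup.of k) :
    a * b = b * a ∧ a * c * a = c * a * c ∧ b * c * b = c * b * c := by
  subst ha hb hc
  refine ⟨?_, ?_, ?_⟩
  · have := PresentedGroup.one_of_mem (rels := typeDRels n)
      (x := commWord (FreeGroup.of i) (FreeGroup.of j)) ⟨i, j, Or.inl ⟨hi, hj, rfl⟩⟩
    simp only [commWord, map_mul, map_inv] at this
    exact mul_inv_eq_iff_eq_mul.1 (mul_inv_eq_one.1 this)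
  · have := PresentedGroup.one_of_mem (rels := typeDRels n)
      (x := braidWord (FreeGroup.of i) (FreeGroup.of k)) ⟨i, k, Or.inr (Or.inl ⟨hi, hk, rfl⟩)⟩
    simp only [braidWord, map_mul, map_inv] at this
    exact mul_inv_eq_one.1 this
  · have := PresentedGroup.one_of_mem (rels := typeDRels n)
      (x := braidWord (FreeGroup.of j) (FreeGroup.of k))
      ⟨j, k, Or.inr (Or.inr (Or.inl ⟨hj, hk, rfl⟩))⟩
    simp only [braidWord, map_mul, map_inv] at this
    exact mul_inv_eq_one.1 this
end main5

/-- for `n ≥ 4` there is no injective homomorphism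
`φ : A(Dₙ) → A(Bₙ)` with `π_D = π_B ∘ φ`, where `π_B : A(Bₙ) → Bₙ` kills `β₁` and sends
`βᵢ ↦ α_{i-1}` (`i ≥ 2`), and `π_D : A(Dₙ) → Bₙ` sends `δ₁, δ₂ ↦ α₁` and `δᵢ ↦ α_{i-1}`
(`i ≥ 3`); here the braid group `Bₙ` has generators `α₁, …, α_{n-1}` indexed by `Fin (n-1)`. -/
theorem stmt18 (n : ℕ) (hn : 4 ≤ n)
    (πB : PresentedGroup (typeBRels n) →* PresentedGroup (braidRels (n - 1)))
    (hπB1 : ∀ i : Fin n, (i : ℕ) = 0 → πB (PresentedGroup.of i) = 1)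
    (hπB2 : ∀ (i : Fin n) (j : Fin (n - 1)), (i : ℕ) = (j : ℕ) + 1 →
      πB (PresentedGroup.of i) = PresentedGroup.of j)
    (πD : PresentedGroup (typeDRels n) →* PresentedGroup (braidRels (n - 1)))
    (hπD1 : ∀ (i : Fin n) (j : Fin (n - 1)), (i : ℕ) ≤ 1 → (j : ℕ) = 0 →
      πD (PresentedGroup.of i) = PresentedGroup.of j)
    (hπD2 : ∀ (i : Fin n) (j : Fin (n - 1)), 2 ≤ (i : ℕ) → (i : ℕ) = (j : ℕ) + 1 →
      πD (PresentedGroup.of i) = PresentedGroup.of j) :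
    ¬ ∃ φ : PresentedGroup (typeDRels n) →* PresentedGroup (typeBRels n),
        Function.Injective φ ∧ πB.comp φ = πD := by
  rintro ⟨φ, hinj, hφ⟩
  have hφ' : ∀ x, πB (φ x) = πD x := fun x => DFunLike.congr_fun hφ x
  obtain ⟨r1, r2, r3⟩ := delta_rels n ⟨0, by omega⟩ ⟨1, by omega⟩ ⟨2, by omega⟩ rfl rfl rfl
    _ _ _ rfl rfl rfl
  refine delta_ne n ⟨0, by omega⟩ ⟨1, by omega⟩ rfl rfl (hinj ?_)
  refine core_eq n hn πB hπB1 hπB2 _ _ (φ (PresentedGroup.of ⟨2, by omega⟩)) ?_ ?_ ?_ ?_ ?_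
  · simpa only [map_mul] using congrArg φ r1
  · simpa only [map_mul] using congrArg φ r2
  · simpa only [map_mul] using congrArg φ r3
  · rw [hφ', bb_lt n 1 (by omega), hπB2 _ ⟨0, by omega⟩ rfl]
    exact hπD1 _ _ (by simp) rfl
  · rw [hφ', hφ', hπD1 _ ⟨0, by omega⟩ le_rfl rfl, hπD1 _ ⟨0, by omega⟩ (by simp) rfl]
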